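/- arXiv:2505.02775 — 4 statements merged into one kernel-verified Lean document; each statement's English description precedes it below -/
import Mathlib

section
/- Let R be a ring and M an R-module of finite length, and let S be a simple R-module occurring with multiplicity one in M. Then there exists a pair of submodules W ≤ X of M with X/W isomorphic to S such that for every pair of submodules W' ≤ X' of M with X'/W' isomorphic to S one has X' ≤ X, W' ≤ W, X' ⊔ W = X and X' ⊓ W = W' (so the inclusion X' ≤ X induces an isomorphism X'/W' ≅ X/W). Moreover the pair (W, X) with this property is unique. -/
/-- The simple module `S` occurs with multiplicity one in the finite-length module `M`:
there is a composition series of `M` going from `⊥` to `⊤` in which exactly one of the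
simple factors is isomorphic to `S`. -/
def OccursWithMultiplicityOne (R : Type*) [Ring R] (M : Type*) [AddCommGroup M] [Module R M]
    (S : Type*) [AddCommGroup S] [Module R S] : Prop :=
  ∃ s : CompositionSeries (Submodule R M), s.head = ⊥ ∧ s.last = ⊤ ∧
    ∃! i : Fin s.length,
      Nonempty ((↥(s i.succ) ⧸ Submodule.comap (s i.succ).subtype (s i.castSucc)) ≃ₗ[R] S)

/-!
The submodules in which `S` does not occur as a subquotient are closed under finite and directed
sums, so there is a greatest one, `W`. Let `X' / W' ≅ S`. Multiplicity one says that `S` does not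
occur in `W'`, whence `W' ≤ W`, while `X' ≰ W`; as `X' / W'` is simple, `X' ⊓ W = W'`, and so
`(X' ⊔ W) / W ≅ S`. Two distinct submodules `X₁`, `X₂` with `Xᵢ / W ≅ S` would give a second
occurrence `(X₁ ⊔ X₂) / X₂ ≅ S` on top of `X₂ / W`, so `X := X' ⊔ W` does not depend on the choice
of `X'` and `W'`.

An occurrence `X / W ≅ S` is located in a composition series `(Mᵢ)` at the first step
`Mᵢ ⋖ Mᵢ₊₁` with `X ⊓ Mᵢ₊₁ ≰ W`, where Zassenhaus' lemma gives `Mᵢ₊₁ / Mᵢ ≅ S`. By modularity,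
occurrences lying one above the other are located at different steps, so multiplicity one excludes
them.
-/

section Cover

variable {α : Type*} [Lattice α] {a x y : α}

theorem sup_eq_of_covBy_of_not_le (hxy : x ⋖ y) (hay : a ≤ y) (hax : ¬a ≤ x) : a ⊔ x = y :=
  (hxy.eq_or_eq le_sup_right (sup_le hay hxy.le)).resolve_left fun h => hax (sup_eq_right.1 h)

theorem inf_eq_of_covBy_of_not_le (hxy : x ⋖ y) (hxa : x ≤ a) (hya : ¬y ≤ a) : y ⊓ a = x :=
  (hxy.eq_or_eq (le_inf hxy.le hxa) inf_le_left).resolve_right fun h => hya (inf_eq_left.1 h)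

theorem inf_le_of_covBy_of_not_le [IsModularLattice α] {b : α}
    (hab : a ⋖ b) (hxy : x ≤ y) (hya : y ⊓ a ≤ x) (hxb : ¬x ⊓ b ≤ a) : y ⊓ b ≤ x :=
  calc
    y ⊓ b = (x ⊓ b ⊔ a) ⊓ y := by
      rw [sup_eq_of_covBy_of_not_le hab inf_le_right hxb, inf_comm]
    _ = x ⊓ b ⊔ a ⊓ y := sup_inf_assoc_of_le a (inf_le_left.trans hxy)
    _ ≤ x := sup_le inf_le_left (inf_comm a y ▸ hya)

end Cover

theorem exists_castSucc_not_and_succ {n : ℕ} {p : Fin (n + 1) → Prop} (h_zero : ¬p 0)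
    (h_last : p (Fin.last n)) : ∃ i : Fin n, ¬p i.castSucc ∧ p i.succ := by
  by_contra! h
  exact Fin.induction (motive := fun i => ¬p i) h_zero h (Fin.last n) h_last

section Factor

variable {R : Type*} [Ring R] {M : Type*} [AddCommGroup M] [Module R M]
  {S : Type*} [AddCommGroup S] [Module R S] {A B N W X X' : Submodule R M}

/-- The subquotient `X / W` of `M`, with `W ≤ X`, is isomorphic to `S`. The quotient is written as
in `OccursWithMultiplicityOne`. -/
def IsFactor (S : Type*) [AddCommGroup S] [Module R S] (W X : Submodule R M) : Prop :=
  W ≤ X ∧ Nonempty ((↥X ⧸ Submodule.comap X.subtype W) ≃ₗ[R] S)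

/-- `S` is isomorphic to a subquotient of the submodule `N` of `M`, where subquotients of `N` are
taken among those of `M`. -/
def OccursIn (S : Type*) [AddCommGroup S] [Module R S] (N : Submodule R M) : Prop :=
  ∃ W X : Submodule R M, IsFactor S W X ∧ X ≤ N

/-- `S` has multiplicity at most one in `M`, in a form that makes sense without composition series:
no two subquotients of `M` isomorphic to `S` lie one above the other. -/
def OccursAtMostOnce (R : Type*) [Ring R] (M : Type*) [AddCommGroup M] [Module R M]
    (S : Type*) [AddCommGroup S] [Module R S] : Prop :=
  ∀ ⦃W X : Submodule R M⦄, IsFactor S W X → ¬OccursIn S W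

theorem isFactor_inf_iff_isFactor_sup : IsFactor S (A ⊓ B) A ↔ IsFactor S B (A ⊔ B) := by
  let e := LinearMap.quotientInfEquivSupQuotient A B
  exact ⟨fun ⟨_, ⟨f⟩⟩ => ⟨le_sup_right, ⟨e.symm.trans f⟩⟩,
    fun ⟨_, ⟨f⟩⟩ => ⟨inf_le_left, ⟨e.trans f⟩⟩⟩

theorem IsFactor.sup_right (h : IsFactor S W X) (hA : X ⊓ A ≤ W) :
    IsFactor S (W ⊔ A) (X ⊔ A) := by
  have h_inf : X ⊓ (W ⊔ A) = W := by
    rw [inf_comm, sup_inf_assoc_of_le A h.1, inf_comm, sup_eq_left.2 hA]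
  have h_sup : X ⊔ (W ⊔ A) = X ⊔ A := by rw [← sup_assoc, sup_eq_left.2 h.1]
  rw [← h_sup, ← isFactor_inf_iff_isFactor_sup, h_inf]
  exact h

theorem OccursWithMultiplicityOne.occursIn_top (h : OccursWithMultiplicityOne R M S) :
    OccursIn S (⊤ : Submodule R M) := by
  obtain ⟨s, -, -, i, hi, -⟩ := h
  exact ⟨s i.castSucc, s i.succ, ⟨(s.step i).le, hi⟩, le_top⟩

section Simple

variable [IsSimpleModule R S]

theorem IsFactor.covBy (h : IsFactor S W X) : W ⋖ X := by
  obtain ⟨hWX, ⟨e⟩⟩ := h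
  exact (covBy_iff_quot_is_simple hWX).2 (IsSimpleModule.congr e)

theorem IsFactor.inf_right (h : IsFactor S W X) (hA : ¬X ⊓ A ≤ W) :
    IsFactor S (W ⊓ A) (X ⊓ A) := by
  have h_inf : X ⊓ A ⊓ W = W ⊓ A := by rw [inf_right_comm, inf_eq_right.2 h.1]
  rw [← h_inf, isFactor_inf_iff_isFactor_sup, sup_eq_of_covBy_of_not_le h.covBy inf_le_left hA]
  exact h

theorem IsFactor.occursIn_of_not_inf_le (h : IsFactor S W X) (hA : ¬X ⊓ A ≤ W) : OccursIn S A :=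
  ⟨_, _, h.inf_right hA, inf_le_right⟩

theorem OccursIn.of_sup (h : OccursIn S (A ⊔ B)) : OccursIn S A ∨ OccursIn S B := by
  obtain ⟨W, X, hWX, hX⟩ := h
  by_cases hA : X ⊓ A ≤ W
  · have h_sup : IsFactor S (W ⊔ A) (X ⊔ A) := hWX.sup_right hA
    refine .inr (h_sup.occursIn_of_not_inf_le fun hB => h_sup.covBy.lt.not_ge ?_)
    calc
      X ⊔ A ≤ (A ⊔ B) ⊓ (X ⊔ A) := le_inf (sup_le hX le_sup_left) le_rfl
      _ = A ⊔ B ⊓ (X ⊔ A) := sup_inf_assoc_of_le B le_sup_right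
      _ ≤ W ⊔ A := sup_le le_sup_right (inf_comm B _ ▸ hB)
  · exact .inl (hWX.occursIn_of_not_inf_le hA)

theorem not_occursIn_bot : ¬OccursIn S (⊥ : Submodule R M) :=
  fun ⟨_, _, h, hX⟩ => not_lt_bot (h.covBy.lt.trans_le hX)

theorem OccursIn.of_sSup {c : Set (Submodule R M)} (hne : c.Nonempty)
    (hdir : DirectedOn (· ≤ ·) c) (h : OccursIn S (sSup c)) : ∃ N ∈ c, OccursIn S N := by
  obtain ⟨W, X, hWX, hX⟩ := h
  obtain ⟨x, hxX, hxW⟩ := SetLike.exists_of_lt hWX.covBy.lt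
  obtain ⟨N, hN, hxN⟩ := (Submodule.mem_sSup_of_directed hne hdir).1 (hX hxX)
  exact ⟨N, hN, hWX.occursIn_of_not_inf_le fun hle => hxW (hle ⟨hxX, hxN⟩)⟩

theorem exists_isGreatest_not_occursIn (R M S : Type*) [Ring R] [AddCommGroup M] [Module R M]
    [AddCommGroup S] [Module R S] [IsSimpleModule R S] :
    ∃ W : Submodule R M, IsGreatest {N | ¬OccursIn S N} W := by
  have h_sup : SupClosed {N : Submodule R M | ¬OccursIn S N} :=
    fun _ hA _ hB h => h.of_sup.elim hA hB
  refine ⟨_, fun h => ?_, fun _ hN => le_sSup hN⟩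
  obtain ⟨N, hN, hSN⟩ := h.of_sSup ⟨⊥, not_occursIn_bot⟩ h_sup.directedOn
  exact hN hSN

theorem OccursAtMostOnce.eq_of_isFactor (hS : OccursAtMostOnce R M S) (hX : IsFactor S W X)
    (hX' : IsFactor S W X') : X = X' := by
  have le_of_isFactor {Y Y' : Submodule R M} (hY : IsFactor S W Y) (hY' : IsFactor S W Y') :
      Y ≤ Y' := by
    by_contra hle
    have h_inf : Y ⊓ Y' = W := inf_eq_of_covBy_of_not_le hY.covBy hY'.1 hle
    have h_sup : IsFactor S Y' (Y ⊔ Y') := isFactor_inf_iff_isFactor_sup.1 (h_inf ▸ hY)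
    exact hS h_sup ⟨W, Y', hY', le_rfl⟩
  exact le_antisymm (le_of_isFactor hX hX') (le_of_isFactor hX' hX)

theorem OccursAtMostOnce.inf_eq_of_isGreatest (hS : OccursAtMostOnce R M S)
    (hN : IsGreatest {N | ¬OccursIn S N} N) (h : IsFactor S W X) : X ⊓ N = W :=
  inf_eq_of_covBy_of_not_le h.covBy (hN.2 (hS h)) fun hX => hN.1 ⟨W, X, h, hX⟩

theorem IsFactor.of_covBy (h : IsFactor S W X) (hAB : A ⋖ B) (hA : X ⊓ A ≤ W)
    (hB : ¬X ⊓ B ≤ W) : IsFactor S A B := by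
  have hXB : ¬X ⊓ B ≤ A := fun hle => hB ((le_inf inf_le_left hle).trans hA)
  have h_top : X ⊓ B ⊔ A = B := sup_eq_of_covBy_of_not_le hAB inf_le_right hXB
  have h_inf : X ⊓ B ⊓ A ≤ W ⊓ B :=
    le_inf ((inf_le_inf_right A inf_le_left).trans hA) (inf_le_left.trans inf_le_right)
  have h_sup : IsFactor S (W ⊓ B ⊔ A) B := by
    simpa only [h_top] using (h.inf_right hB).sup_right h_inf
  have h_bot : W ⊓ B ⊔ A = A :=
    (hAB.eq_or_eq le_sup_right h_sup.1).resolve_right h_sup.covBy.ne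
  exact h_bot ▸ h_sup

theorem IsFactor.exists_step (h : IsFactor S W X) (s : CompositionSeries (Submodule R M))
    (h_head : X ⊓ s.head ≤ W) (h_last : X ≤ s.last) :
    ∃ i : Fin s.length, X ⊓ s i.castSucc ≤ W ∧ ¬X ⊓ s i.succ ≤ W ∧
      IsFactor S (s i.castSucc) (s i.succ) := by
  have h_not_le : ¬X ⊓ s.last ≤ W := by
    rw [inf_eq_left.2 h_last]
    exact h.covBy.lt.not_ge
  obtain ⟨i, hi, hi'⟩ := exists_castSucc_not_and_succ (p := fun i => ¬X ⊓ s i ≤ W)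
    (not_not.2 h_head) h_not_le
  exact ⟨i, not_not.1 hi, hi', h.of_covBy (s.step i) (not_not.1 hi) hi'⟩

theorem OccursWithMultiplicityOne.occursAtMostOnce (h : OccursWithMultiplicityOne R M S) :
    OccursAtMostOnce R M S := by
  rintro W' X' h' ⟨W, X, hWX, hXW'⟩
  obtain ⟨s, h_bot, h_top, _, -, h_unique⟩ := h
  have exists_step {V Y : Submodule R M} (hVY : IsFactor S V Y) :=
    hVY.exists_step s (by simp [h_bot]) (by simp [h_top])
  obtain ⟨i, hi, hi', h_step⟩ := exists_step hWX
  obtain ⟨j, hj, hj', h_step'⟩ := exists_step h'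
  obtain rfl : i = j := (h_unique i h_step.2).trans (h_unique j h_step'.2).symm
  have hX : ¬X ⊓ s i.succ ≤ s i.castSucc := fun hle => hi' ((le_inf inf_le_left hle).trans hi)
  have hW' : ¬W' ⊓ s i.succ ≤ s i.castSucc := fun hle =>
    hX ((inf_le_inf_right _ hXW').trans hle)
  exact hj' (inf_le_of_covBy_of_not_le (s.step i) h'.1 hj hW')

theorem multiplicity_one_pair_general (hS : OccursAtMostOnce R M S)
    (hocc : OccursIn S (⊤ : Submodule R M)) :
    ∃! p : Submodule R M × Submodule R M, IsFactor S p.1 p.2 ∧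
      ∀ W' X' : Submodule R M, IsFactor S W' X' →
        X' ≤ p.2 ∧ W' ≤ p.1 ∧ X' ⊔ p.1 = p.2 ∧ X' ⊓ p.1 = W' := by
  obtain ⟨W, hW⟩ := exists_isGreatest_not_occursIn R M S
  have h_inf {W' X' : Submodule R M} (h : IsFactor S W' X') : X' ⊓ W = W' :=
    hS.inf_eq_of_isGreatest hW h
  have h_sup {W' X' : Submodule R M} (h : IsFactor S W' X') : IsFactor S W (X' ⊔ W) :=
    isFactor_inf_iff_isFactor_sup.1 ((h_inf h).symm ▸ h)
  obtain ⟨W₀, X₀, h₀, -⟩ := hocc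
  refine ⟨(W, X₀ ⊔ W), ⟨h_sup h₀, fun W' X' h => ?_⟩, fun q ⟨hq, hq_max⟩ => ?_⟩
  · have hX : X' ⊔ W = X₀ ⊔ W := hS.eq_of_isFactor (h_sup h) (h_sup h₀)
    exact ⟨hX ▸ le_sup_left, h_inf h ▸ inf_le_right, hX, h_inf h⟩
  · obtain ⟨-, hWq, -⟩ := hq_max _ _ (h_sup h₀)
    have hqW : q.1 = W := le_antisymm (h_inf hq ▸ inf_le_right) hWq
    exact Prod.ext hqW (hS.eq_of_isFactor (hqW ▸ hq) (h_sup h₀))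

end Simple

end Factor

/-- If `S` is a simple module occurring with multiplicity one in the finite-length module `M`,
then there is a unique pair of submodules `W ≤ X` of `M` with `X/W ≅ S` such that every pair
`W' ≤ X'` with `X'/W' ≅ S` satisfies `X' ≤ X`, `W' ≤ W`, `X' ⊔ W = X` and `X' ⊓ W = W'`. -/
theorem multiplicity_one_pair (R : Type*) [Ring R] (M : Type*) [AddCommGroup M] [Module R M]
    (S : Type*) [AddCommGroup S] [Module R S] [IsSimpleModule R S]
    (hfl : IsFiniteLength R M)
    (hmult : OccursWithMultiplicityOne R M S) :
    ∃! p : Submodule R M × Submodule R M,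
      (p.1 ≤ p.2 ∧ Nonempty ((↥p.2 ⧸ Submodule.comap p.2.subtype p.1) ≃ₗ[R] S)) ∧
      ∀ W' X' : Submodule R M, W' ≤ X' →
        Nonempty ((↥X' ⧸ Submodule.comap X'.subtype W') ≃ₗ[R] S) →
        X' ≤ p.2 ∧ W' ≤ p.1 ∧ X' ⊔ p.1 = p.2 ∧ X' ⊓ p.1 = W' := by
  simpa only [IsFactor, and_imp] using
    multiplicity_one_pair_general hmult.occursAtMostOnce hmult.occursIn_top
end

section
/- One has h·s·h⁻¹ = ζ⁻¹·s. Moreover, if x ∈ GL_n(ℂ) and z ∈ ℂ^× satisfy x·s·x⁻¹ = z·s, then there exists k ∈ {0, …, d−1} such that z = ζ^k and h^k·x commutes with s (i.e., x lies in the coset h^{−k}·Z(s) of the centralizer Z(s) of s). Consequently the quotient of {x ∈ GL_n(ℂ) : x s x⁻¹ ∈ ℂ^×·s} by the centralizer of s is cyclic of order d, generated by the class of h. -/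
/-- The diagonal matrix `s = diag(I_m, ζ·I_m, …, ζ^{d−1}·I_m)`, with entry `ζ^i` at each
index `(i,a)` (the block index `i` being viewed cyclically, i.e. in `ℤ/d`). -/
noncomputable def sMat (d m : ℕ) (ζ : ℂ) : Matrix (ZMod d × Fin m) (ZMod d × Fin m) ℂ :=
  Matrix.diagonal fun p => ζ ^ p.1.val

/-- The permutation matrix `h` of the index permutation `(i,a) ↦ (i+1,a)` (block cyclic
shift). -/
noncomputable def hMat (d m : ℕ) [NeZero d] : Matrix (ZMod d × Fin m) (ZMod d × Fin m) ℂ :=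
  Matrix.of fun p q => if p.1 = q.1 + 1 ∧ p.2 = q.2 then 1 else 0

/-!
`s` is the block diagonal matrix of an additive character `χ` of `ℤ/d`, and `h ^ k` is the
permutation matrix of the block translation by `k`, so `h ^ k` conjugates `s` into `χ (-k) • s`.
If `x` conjugates `s` into `z • s`, then a nonzero entry of `x` at `((0, a), (j, b))` forces
`z = χ j`, and an invertible `x` has one in each row. The scalars `χ j` and `χ (-j)` cancel when
`h ^ j * x` is moved past `s`.
-/

section Matrix

variable {n R : Type*} [Fintype n] [DecidableEq n] [CommRing R]

lemma mul_mul_inv_eq_iff_semiconjBy {x : Matrix n n R} (hx : IsUnit x) {y z : Matrix n n R} :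
    x * y * x⁻¹ = z ↔ SemiconjBy x y z := by
  have hdet : IsUnit x.det := x.isUnit_iff_isUnit_det.mp hx
  constructor
  · rintro rfl
    exact (Matrix.nonsing_inv_mul_cancel_right _ _ hdet).symm
  · intro h
    rw [h.eq, Matrix.mul_nonsing_inv_cancel_right _ _ hdet]

lemma exists_apply_ne_zero_of_isUnit [Nontrivial R] {x : Matrix n n R} (hx : IsUnit x) (i : n) :
    ∃ j, x i j ≠ 0 := by
  by_contra! hrow
  exact (x.isUnit_iff_isUnit_det.mp hx).ne_zero (Matrix.det_eq_zero_of_row_eq_zero i hrow)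

lemma semiconjBy_diagonal_smul_iff {x : Matrix n n R} {v : n → R} {z : R} :
    SemiconjBy x (Matrix.diagonal v) (z • Matrix.diagonal v) ↔
      ∀ i j, x i j * v j = z * v i * x i j := by
  simp only [SemiconjBy, ← Matrix.ext_iff, Matrix.mul_diagonal, smul_mul_assoc, Matrix.smul_apply,
    Matrix.diagonal_mul, smul_eq_mul, mul_assoc]

end Matrix

section Character

variable {A ι R : Type*} [AddGroup A] [DecidableEq A] [DecidableEq ι] [CommRing R]

variable (ι) in
/-- The block diagonal matrix with block `χ i • 1` at each `i : A`, all blocks being indexed by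
`ι`. It generalizes `sMat`, where `χ` is the character `i ↦ ζ ^ i` of `ℤ/d`. -/
def characterMat (χ : AddChar A R) : Matrix (A × ι) (A × ι) R :=
  Matrix.diagonal fun p => χ p.1

variable [Fintype A] [Fintype ι]

variable (A ι R) in
/-- The representation of `A` by the permutation matrices of the block translations
`(i, b) ↦ (a + i, b)`, generalizing the powers of `hMat`. The permutation is inverted because the
nonzero entries of `σ.permMatrix` are at `(p, σ p)`. -/
def translationMat : AddChar A (Matrix (A × ι) (A × ι) R) where
  toFun a := Equiv.Perm.permMatrix R ((Equiv.addLeft (-a)).prodCongr (Equiv.refl ι))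
  map_zero_eq_one' := by
    rw [← Matrix.permMatrix_one]
    congr 1
    ext p <;> simp
  map_add_eq_mul' a b := by
    rw [← Matrix.permMatrix_mul]
    congr 1
    ext p <;> simp [add_assoc]

lemma translationMat_apply (a : A) (p q : A × ι) :
    translationMat A ι R a p q = if p.1 = a + q.1 ∧ p.2 = q.2 then 1 else 0 := by
  simp [translationMat, PEquiv.toMatrix_apply, Prod.ext_iff, neg_add_eq_iff_eq_add]

lemma semiconjBy_translationMat (χ : AddChar A R) (a : A) :
    SemiconjBy (translationMat A ι R a) (characterMat ι χ) (χ (-a) • characterMat ι χ) := by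
  refine semiconjBy_diagonal_smul_iff.mpr fun p q => ?_
  rw [translationMat_apply]
  split_ifs with h
  · rw [h.1, ← AddChar.map_add_eq_mul, neg_add_cancel_left, one_mul, mul_one]
  · rw [zero_mul, mul_zero]

lemma exists_eq_character_of_semiconjBy [IsDomain R] [Nonempty ι] {χ : AddChar A R}
    {x : Matrix (A × ι) (A × ι) R} (hx : IsUnit x) {z : R}
    (h : SemiconjBy x (characterMat ι χ) (z • characterMat ι χ)) : ∃ a, z = χ a := by
  obtain ⟨b⟩ := ‹Nonempty ι›
  obtain ⟨q, hq⟩ := exists_apply_ne_zero_of_isUnit hx (0, b)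
  have hentry := semiconjBy_diagonal_smul_iff.mp h (0, b) q
  rw [AddChar.map_zero_eq_one, mul_one, mul_comm] at hentry
  exact ⟨q.1, (mul_right_cancel₀ hq hentry).symm⟩

lemma commute_translationMat_mul {χ : AddChar A R} {x : Matrix (A × ι) (A × ι) R} {a : A}
    (h : SemiconjBy x (characterMat ι χ) (χ a • characterMat ι χ)) :
    Commute (translationMat A ι R a * x) (characterMat ι χ) := by
  have hmul := ((semiconjBy_translationMat χ a).smul_right (χ a)).mul_left h
  rwa [smul_smul, ← AddChar.map_add_eq_mul, add_neg_cancel, AddChar.map_zero_eq_one,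
    one_smul] at hmul

theorem conjugation_sMat_general [IsDomain R] [Nonempty ι] (χ : AddChar A R) :
    (∀ a, translationMat A ι R a * characterMat ι χ * (translationMat A ι R a)⁻¹ =
      χ (-a) • characterMat ι χ) ∧
    ∀ x : Matrix (A × ι) (A × ι) R, IsUnit x →
      ∀ z : R, x * characterMat ι χ * x⁻¹ = z • characterMat ι χ →
        ∃ a, z = χ a ∧ Commute (translationMat A ι R a * x) (characterMat ι χ) := by
  refine ⟨fun a => ?_, fun x hx z hconj => ?_⟩
  · exact (mul_mul_inv_eq_iff_semiconjBy (AddChar.val_isUnit _ a)).mpr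
      (semiconjBy_translationMat χ a)
  · have h := (mul_mul_inv_eq_iff_semiconjBy hx).mp hconj
    obtain ⟨a, rfl⟩ := exists_eq_character_of_semiconjBy hx h
    exact ⟨a, rfl, commute_translationMat_mul h⟩

end Character

lemma sMat_eq_characterMat (d m : ℕ) [NeZero d] {ζ : ℂ} (hζ : ζ ^ d = 1) :
    sMat d m ζ = characterMat (Fin m) (AddChar.zmodChar d hζ) :=
  rfl

lemma hMat_eq_translationMat_one (d m : ℕ) [NeZero d] :
    hMat d m = translationMat (ZMod d) (Fin m) ℂ 1 := by
  ext p q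
  rw [translationMat_apply, hMat, Matrix.of_apply, add_comm]

lemma hMat_pow_eq_translationMat (d m k : ℕ) [NeZero d] :
    hMat d m ^ k = translationMat (ZMod d) (Fin m) ℂ k := by
  rw [hMat_eq_translationMat_one, ← AddChar.map_nsmul_eq_pow, nsmul_one]

lemma zmodChar_neg_one {d : ℕ} [NeZero d] {K : Type*} [Field K] {ζ : K} (hζ : ζ ^ d = 1) :
    AddChar.zmodChar d hζ (-1) = ζ⁻¹ := by
  rw [AddChar.map_neg_eq_inv, ← Nat.cast_one, AddChar.zmodChar_apply', pow_one]

/-- One has `h·s·h⁻¹ = ζ⁻¹·s`; and if an invertible matrix `x` and `z ∈ ℂˣ` satisfy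
`x·s·x⁻¹ = z·s`, then `z = ζ^k` for some `0 ≤ k < d` and `h^k·x` commutes with `s`,
i.e. `x` lies in the coset `h^{−k}·Z(s)` of the centralizer of `s`. -/
theorem conjugation_sMat (d m : ℕ) [NeZero d] (hm : 1 ≤ m)
    (ζ : ℂ) (hζ : IsPrimitiveRoot ζ d) :
    hMat d m * sMat d m ζ * (hMat d m)⁻¹ = ζ⁻¹ • sMat d m ζ ∧
    ∀ x : Matrix (ZMod d × Fin m) (ZMod d × Fin m) ℂ, IsUnit x →
      ∀ z : ℂ, z ≠ 0 → x * sMat d m ζ * x⁻¹ = z • sMat d m ζ →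
        ∃ k : ℕ, k < d ∧ z = ζ ^ k ∧
          (hMat d m ^ k * x) * sMat d m ζ = sMat d m ζ * (hMat d m ^ k * x) := by
  have : Nonempty (Fin m) := ⟨⟨0, hm⟩⟩
  obtain ⟨hconj, hcoset⟩ :=
    conjugation_sMat_general (ι := Fin m) (AddChar.zmodChar d hζ.pow_eq_one)
  rw [sMat_eq_characterMat d m hζ.pow_eq_one]
  refine ⟨?_, fun x hx z _ hxz => ?_⟩
  · rw [hMat_eq_translationMat_one, hconj, zmodChar_neg_one]
  · obtain ⟨a, hza, hcomm⟩ := hcoset x hx z hxz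
    refine ⟨a.val, a.val_lt, hza, ?_⟩
    rw [hMat_pow_eq_translationMat, ZMod.natCast_zmod_val]
    exact hcomm
end

section
/- With F, K, τ, r, s, A = K^r and σ as given, set d = rs. For every x ∈ A and every index j ∈ Fin r, the j-th coordinate of the product ∏_{i=0}^{d−1} σ^i(x) equals the image in K of N_{K/F}(x_0·x_1·⋯·x_{r−1}), where N_{K/F} denotes the field norm (Algebra.norm). In particular all coordinates of this product are equal and lie in F, and the subgroup {(∏_{i=0}^{d−1} σ^i(x))_0 : x a unit of A} of F^× equals N_{K/F}(K^×). -/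
/-- The cyclic shift-with-twist map `σ` on `A = K^r`: `(σx)_0 = τ(x_{r−1})` and
`(σx)_i = x_{i−1}` for `1 ≤ i ≤ r−1` (here `i - 1` is cyclic subtraction in `Fin r`). -/
def cycShift (K : Type*) (r : ℕ) [NeZero r] (τ : K → K) :
    (Fin r → K) → (Fin r → K) :=
  fun x i => if i = 0 then τ (x (i - 1)) else x (i - 1)

/-!
Iterating `σ = cycShift` moves each coordinate step by step towards the last position and applies
`τ` once per full turn, so `σ ^ r` is `τ` in every coordinate, and the last coordinates of
`x, σ x, …, σ ^ (r - 1) x` are the coordinates of `x`, untwisted, in reverse order. The last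
coordinate of `∏_{i < rs} σ ^ i x` is therefore `∏_i ∏_{k < s} τ ^ k (x i)`, a product of norms.
As `τ ^ s = 1`, this product is fixed by `σ`, and a vector fixed by `σ` has all its coordinates
equal; so one coordinate determines the others.
-/

open Finset Function

section Products

theorem prod_range_mul {M : Type*} [CommMonoid M] (f : ℕ → M) (r s : ℕ) :
    ∏ i ∈ range (r * s), f i = ∏ k ∈ range s, ∏ i ∈ range r, f (r * k + i) := by
  induction s with
  | zero => simp
  | succ s ih => rw [Nat.mul_succ, prod_range_add, ih, prod_range_succ]

theorem map_prod_range_iterate_of_isPeriodicPt {M : Type*} [CommMonoid M] {φ : M →* M} {d : ℕ}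
    {x : M} (hx : IsPeriodicPt φ d x) :
    φ (∏ i ∈ range d, φ^[i] x) = ∏ i ∈ range d, φ^[i] x := by
  rw [map_prod]
  simp only [← iterate_succ_apply' φ]
  cases d with
  | zero => rfl
  | succ d => rw [prod_range_succ, prod_range_succ', hx.eq, iterate_zero_apply]

theorem prod_univ_eq_prod_range_orderOf {G M : Type*} [Group G] [Fintype G] [CommMonoid M]
    {g : G} (hg : ∀ h, h ∈ Subgroup.zpowers g) (f : G → M) :
    ∏ h, f h = ∏ k ∈ range (orderOf g), f (g ^ k) := by
  classical
  rw [← IsCyclic.image_range_orderOf hg, prod_image]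
  simpa only [coe_range] using pow_injOn_Iio_orderOf

end Products

section CyclicGalois

variable {F K : Type*} [Field F] [Field K] [Algebra F K] [FiniteDimensional F K] [IsGalois F K]

theorem iterate_finrank_eq_id (τ : K ≃ₐ[F] K) : τ^[Module.finrank F K] = id := by
  rw [← AlgEquiv.coe_pow, ← IsGalois.card_aut_eq_finrank, pow_card_eq_one']
  rfl

theorem algebraMap_norm_eq_prod_range_iterate {τ : K ≃ₐ[F] K}
    (hτ : ∀ g, g ∈ Subgroup.zpowers τ) (y : K) :
    algebraMap F K (Algebra.norm F y) = ∏ k ∈ range (Module.finrank F K), τ^[k] y := by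
  rw [Algebra.norm_eq_prod_automorphisms, prod_univ_eq_prod_range_orderOf hτ,
    orderOf_eq_card_of_forall_mem_zpowers hτ, IsGalois.card_aut_eq_finrank]
  simp only [AlgEquiv.coe_pow]

end CyclicGalois

section Iterate

variable {M : Type*} {n : ℕ}

theorem cycShift_apply_zero (τ : M → M) (x : Fin (n + 1) → M) :
    cycShift M (n + 1) τ x 0 = τ (x (Fin.last n)) := by
  have hpred : (0 : Fin (n + 1)) - 1 = Fin.last n := sub_eq_of_eq_add (Fin.last_add_one n).symm
  rw [cycShift, if_pos rfl, hpred]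

theorem cycShift_apply_succ (τ : M → M) (x : Fin (n + 1) → M) (j : Fin n) :
    cycShift M (n + 1) τ x j.succ = x j.castSucc := by
  have hpred : j.succ - 1 = j.castSucc := sub_eq_of_eq_add Fin.coeSucc_eq_succ.symm
  rw [cycShift, if_neg j.succ_ne_zero, hpred]

theorem cycShift_iterate_apply_of_val_eq_add (τ : M → M) (x : Fin (n + 1) → M) {i : ℕ}
    {j m : Fin (n + 1)} (h : (j : ℕ) = m + i) : (cycShift M (n + 1) τ)^[i] x j = x m := by
  induction i generalizing j with
  | zero => rw [iterate_zero_apply, Fin.ext h]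
  | succ i ih =>
    obtain ⟨k, rfl⟩ := Fin.exists_succ_eq.2 (show j ≠ 0 from fun hj => by simp [hj] at h)
    rw [iterate_succ_apply', cycShift_apply_succ]
    exact ih (by simpa [← add_assoc] using h)

theorem cycShift_iterate_card (τ : M → M) :
    (cycShift M (n + 1) τ)^[n + 1] = Pi.map fun _ => τ := by
  funext x j
  -- Coordinate `j` reaches the last position, wraps around to `0` through `τ`, and returns to `j`.
  have hsplit : n + 1 = j + (n - j).succ := by lia
  calc (cycShift M (n + 1) τ)^[n + 1] x j
      = (cycShift M (n + 1) τ)^[j] (cycShift M (n + 1) τ ((cycShift M (n + 1) τ)^[n - j] x)) j := by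
        rw [← iterate_succ_apply' (cycShift M (n + 1) τ), ← iterate_add_apply, ← hsplit]
    _ = cycShift M (n + 1) τ ((cycShift M (n + 1) τ)^[n - j] x) 0 :=
        cycShift_iterate_apply_of_val_eq_add τ _ (by simp)
    _ = τ ((cycShift M (n + 1) τ)^[n - j] x (Fin.last n)) := cycShift_apply_zero τ _
    _ = τ (x j) := by
        rw [cycShift_iterate_apply_of_val_eq_add τ x (m := j) (by rw [Fin.val_last]; lia)]

theorem cycShift_iterate_card_mul (τ : M → M) (k : ℕ) :
    (cycShift M (n + 1) τ)^[(n + 1) * k] = Pi.map fun _ => τ^[k] := by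
  rw [iterate_mul, cycShift_iterate_card, Pi.map_iterate]

theorem apply_eq_apply_zero_of_isFixedPt_cycShift {τ : M → M} {x : Fin (n + 1) → M}
    (hx : IsFixedPt (cycShift M (n + 1) τ) x) (j : Fin (n + 1)) : x j = x 0 := by
  induction j using Fin.induction with
  | zero => rfl
  | succ j ih => rw [← ih, ← cycShift_apply_succ τ x j, hx.eq]

end Iterate

section Norm

/-- The twisted shift `cycShift` by a multiplicative map `τ`, as an endomorphism of the monoid
`M ^ r`; it lets products be pushed through `cycShift`. -/
def cycShiftHom {M G : Type*} [MulOneClass M] [FunLike G M M] [MonoidHomClass G M M] (r : ℕ)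
    [NeZero r] (τ : G) : (Fin r → M) →* (Fin r → M) where
  toFun := cycShift M r τ
  map_one' := by
    funext i
    simp [cycShift]
  map_mul' x y := by
    funext i
    simp only [cycShift, Pi.mul_apply, map_mul]
    split_ifs <;> rfl

variable {M : Type*} [CommMonoid M] {n : ℕ}

theorem prod_range_cycShift_iterate_apply_last (τ : M → M) (x : Fin (n + 1) → M) :
    ∏ i ∈ range (n + 1), (cycShift M (n + 1) τ)^[i] x (Fin.last n) = ∏ i, x i := by
  rw [prod_range, ← Equiv.prod_comp Fin.revPerm x]
  exact prod_congr rfl fun i _ =>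
    cycShift_iterate_apply_of_val_eq_add τ x <| by
      rw [Fin.val_last, Fin.revPerm_apply, Fin.val_rev]
      lia

theorem prod_range_mul_cycShift_iterate_apply_last (τ : M → M) (s : ℕ) (x : Fin (n + 1) → M) :
    (∏ i ∈ range ((n + 1) * s), (cycShift M (n + 1) τ)^[i] x) (Fin.last n) =
      ∏ i, ∏ k ∈ range s, τ^[k] (x i) := by
  rw [Finset.prod_apply, prod_range_mul, prod_comm (s := univ)]
  refine prod_congr rfl fun k _ => ?_
  simp only [add_comm ((n + 1) * k), iterate_add_apply]
  rw [prod_range_cycShift_iterate_apply_last, cycShift_iterate_card_mul]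
  rfl

theorem prod_range_mul_cycShift_iterate_apply {G : Type*} [FunLike G M M] [MonoidHomClass G M M]
    {τ : G} {s : ℕ} (hτ : τ^[s] = id) (x : Fin (n + 1) → M) (j : Fin (n + 1)) :
    (∏ i ∈ range ((n + 1) * s), (cycShift M (n + 1) τ)^[i] x) j =
      ∏ i, ∏ k ∈ range s, τ^[k] (x i) := by
  have hperiodic : IsPeriodicPt (cycShiftHom (n + 1) τ) ((n + 1) * s) x := by
    change (cycShift M (n + 1) τ)^[(n + 1) * s] x = x
    rw [cycShift_iterate_card_mul, hτ]
    rfl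
  have hfixed : IsFixedPt (cycShift M (n + 1) τ)
      (∏ i ∈ range ((n + 1) * s), (cycShift M (n + 1) τ)^[i] x) :=
    map_prod_range_iterate_of_isPeriodicPt hperiodic
  rw [← prod_range_mul_cycShift_iterate_apply_last,
    apply_eq_apply_zero_of_isFixedPt_cycShift hfixed j,
    apply_eq_apply_zero_of_isFixedPt_cycShift hfixed (Fin.last n)]

end Norm

/-- Let `K/F` be a finite Galois extension of degree `s` with cyclic Galois group generated
by `τ`, let `A = K^r` with the cyclic `F`-algebra automorphism `σ` above, and set `d = rs`.
For every `x ∈ A` and every coordinate `j`, the `j`-th coordinate of `∏_{i=0}^{d−1} σ^i(x)`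
equals the image in `K` of `N_{K/F}(x_0·x_1·⋯·x_{r−1})`; and the set of values
`(∏_{i=0}^{d−1} σ^i(x))_0` for `x` a unit of `A` equals `N_{K/F}(K^×)`. -/
theorem cyclic_algebra_norm (F K : Type*) [Field F] [Field K] [Algebra F K]
    [FiniteDimensional F K] [IsGalois F K]
    (s : ℕ) (hs : Module.finrank F K = s) (hs1 : 1 ≤ s)
    (τ : K ≃ₐ[F] K) (hτ : ∀ g : K ≃ₐ[F] K, g ∈ Subgroup.zpowers τ)
    (r : ℕ) [NeZero r] (hr : 1 ≤ r) :
    (∀ x : Fin r → K, ∀ j : Fin r,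
        (∏ i ∈ Finset.range (r * s), (cycShift K r ⇑τ)^[i] x) j =
          algebraMap F K (Algebra.norm F (∏ i : Fin r, x i))) ∧
    {z : K | ∃ x : Fin r → K, (∀ i, x i ≠ 0) ∧
        (∏ i ∈ Finset.range (r * s), (cycShift K r ⇑τ)^[i] x) 0 = z} =
      {z : K | ∃ y : K, y ≠ 0 ∧ algebraMap F K (Algebra.norm F y) = z} := by
  subst hs
  obtain ⟨n, rfl⟩ := Nat.exists_eq_succ_of_ne_zero (NeZero.ne r)
  have hnorm : ∀ (x : Fin (n + 1) → K) (j : Fin (n + 1)),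
      (∏ i ∈ range ((n + 1) * Module.finrank F K), (cycShift K (n + 1) τ)^[i] x) j =
        algebraMap F K (Algebra.norm F (∏ i, x i)) := fun x j => by
    rw [prod_range_mul_cycShift_iterate_apply (iterate_finrank_eq_id τ), map_prod, map_prod]
    simp only [algebraMap_norm_eq_prod_range_iterate hτ]
  refine ⟨hnorm, Set.ext fun z => ⟨?_, ?_⟩⟩
  · rintro ⟨x, hx, rfl⟩
    exact ⟨∏ i, x i, prod_ne_zero_iff.2 fun i _ => hx i, (hnorm x 0).symm⟩
  · rintro ⟨y, hy, rfl⟩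
    refine ⟨Fin.cons y 1, Fin.forall_fin_succ.2 ⟨hy, fun _ => one_ne_zero⟩, ?_⟩
    rw [hnorm, Fin.prod_cons]
    simp
end

section
/- With F, K, τ, r, s, A = K^r and σ as given, set d = rs. Then σ^d is the identity, d is the exact order of σ, and an element x ∈ A satisfies σ(x) = x if and only if all coordinates of x are equal to a single element of F; that is, the fixed points of σ in A are exactly the diagonal image of F. -/
/-!
After `n` steps of `σ` the entry at position `j` sits at position `(j + n) mod r`, and `τ` has been
applied to it once for each of the `⌊(j + n) / r⌋` wraps around to position `0`. In particular `σ^r`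
is `τ` acting coordinatewise, while `σ^n` with `r ∤ n` moves positions; so the order of `σ` is `r`
times that of `τ`. A fixed point is constant, and its common value is fixed by `τ`, hence by the
whole Galois group.
-/

section CycShift

variable {K : Type*} {r : ℕ} [NeZero r] {τ : K → K}

theorem cycShift_apply_ofNat_succ (x : Fin r → K) (n : ℕ) :
    cycShift K r τ x (Fin.ofNat r (n + 1)) =
      if r ∣ n + 1 then τ (x (Fin.ofNat r n)) else x (Fin.ofNat r n) := by
  have pred_index : Fin.ofNat r (n + 1) - 1 = Fin.ofNat r n := by
    rw [sub_eq_iff_eq_add]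
    ext
    simp [Fin.val_add]
  have index_eq_zero_iff : Fin.ofNat r (n + 1) = 0 ↔ r ∣ n + 1 := by
    simp [Fin.ext_iff, Nat.dvd_iff_mod_eq_zero]
  simp only [cycShift, pred_index, index_eq_zero_iff]

theorem iterate_cycShift_apply_ofNat_add (x : Fin r → K) (j : Fin r) (n : ℕ) :
    (cycShift K r τ)^[n] x (Fin.ofNat r (j + n)) = τ^[(j + n) / r] (x j) := by
  induction n with
  | zero => simp [Nat.div_eq_of_lt j.isLt]
  | succ n ih =>
    rw [Function.iterate_succ_apply', ← add_assoc, cycShift_apply_ofNat_succ, ih, Nat.succ_div]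
    split_ifs
    · rw [Function.iterate_succ_apply']
    · rfl

theorem iterate_mul_cycShift (x : Fin r → K) (n : ℕ) :
    (cycShift K r τ)^[r * n] x = τ^[n] ∘ x := by
  funext j
  have index_eq : Fin.ofNat r (j + r * n) = j := by
    ext
    simp [Nat.mod_eq_of_lt j.isLt]
  have wraps_eq : (j + r * n) / r = n := by
    rw [Nat.add_mul_div_left _ _ (NeZero.pos r), Nat.div_eq_of_lt j.isLt, zero_add]
  simpa only [index_eq, wraps_eq, Function.comp_apply] using
    iterate_cycShift_apply_ofNat_add x j (r * n)

theorem dvd_of_iterate_cycShift_eq_id [Nontrivial K] {n : ℕ}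
    (h : (cycShift K r τ)^[n] = id) : r ∣ n := by
  by_contra not_dvd
  have index_ne : 0 ≠ Fin.ofNat r n := by
    simpa [Fin.ext_iff, Nat.dvd_iff_mod_eq_zero, eq_comm] using not_dvd
  obtain ⟨a⟩ : Nonempty K := inferInstance
  obtain ⟨b, hb⟩ := exists_ne (τ^[n / r] a)
  -- Coordinate `n mod r` of `σ^n x` depends only on `x 0`, so altering `x` there has no effect.
  have apply_update := iterate_cycShift_apply_ofNat_add (τ := τ)
    (Function.update (fun _ => a) (Fin.ofNat r n) b) 0 n
  simp only [h, id, Fin.val_zero, zero_add, Function.update_self,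
    Function.update_of_ne index_ne] at apply_update
  exact hb apply_update

theorem iterate_mul_cycShift_eq_id_iff {n : ℕ} :
    (cycShift K r τ)^[r * n] = id ↔ τ^[n] = id := by
  refine ⟨fun h => funext fun a => ?_, fun h => funext fun x => ?_⟩
  · have const_eq := iterate_mul_cycShift (τ := τ) (fun _ : Fin r => a) n
    rw [h] at const_eq
    exact (congrFun const_eq 0).symm
  · rw [iterate_mul_cycShift, h, Function.id_comp, id]

theorem iterate_cycShift_eq_id_iff_mul_dvd [Nontrivial K] {s : ℕ}
    (hτ : ∀ m : ℕ, τ^[m] = id ↔ s ∣ m) (n : ℕ) :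
    (cycShift K r τ)^[n] = id ↔ r * s ∣ n := by
  constructor
  · intro h
    obtain ⟨m, rfl⟩ := dvd_of_iterate_cycShift_eq_id h
    exact mul_dvd_mul_left r ((hτ m).mp (iterate_mul_cycShift_eq_id_iff.mp h))
  · rintro ⟨m, rfl⟩
    rw [mul_assoc, iterate_mul_cycShift_eq_id_iff, hτ]
    exact dvd_mul_right s m

theorem cycShift_eq_self_iff {x : Fin r → K} :
    cycShift K r τ x = x ↔ ∃ c, τ c = c ∧ x = fun _ => c := by
  constructor
  · intro hx
    have coord_eq (i : Fin r) : x i = x 0 := by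
      simpa [Function.iterate_fixed hx, Nat.div_eq_of_lt i.isLt] using
        iterate_cycShift_apply_ofNat_add (τ := τ) x 0 i
    have comp_eq : x = τ ∘ x := by
      simpa [Function.iterate_fixed hx] using iterate_mul_cycShift (τ := τ) x 1
    exact ⟨x 0, (congrFun comp_eq 0).symm, funext coord_eq⟩
  · rintro ⟨c, hc, rfl⟩
    funext i
    simp [cycShift, hc]

end CycShift

theorem algEquiv_iterate_eq_id_iff_orderOf_dvd {R A : Type*} [CommSemiring R] [Semiring A]
    [Algebra R A] (τ : A ≃ₐ[R] A) (n : ℕ) : (⇑τ)^[n] = id ↔ orderOf τ ∣ n := by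
  rw [orderOf_dvd_iff_pow_eq_one, ← AlgEquiv.coe_pow]
  exact DFunLike.coe_fn_eq (g := (1 : A ≃ₐ[R] A))

section CyclicGalois

variable {F K : Type*} [Field F] [Field K] [Algebra F K] [IsGalois F K] {τ : K ≃ₐ[F] K}

theorem orderOf_eq_finrank_of_forall_mem_zpowers [FiniteDimensional F K]
    (hτ : ∀ g, g ∈ Subgroup.zpowers τ) : orderOf τ = Module.finrank F K := by
  rw [orderOf_eq_card_of_forall_mem_zpowers hτ, IsGalois.card_aut_eq_finrank]

theorem mem_range_algebraMap_iff_fixed_of_forall_mem_zpowers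
    (hτ : ∀ g, g ∈ Subgroup.zpowers τ) {c : K} :
    c ∈ Set.range (algebraMap F K) ↔ τ c = c := by
  rw [InfiniteGalois.mem_range_algebraMap_iff_fixed]
  refine ⟨fun h => h τ, fun h g => ?_⟩
  have mem_stabilizer : τ ∈ MulAction.stabilizer (K ≃ₐ[F] K) c := h
  exact Subgroup.zpowers_le.mpr mem_stabilizer (hτ g)

end CyclicGalois

/-- Let `K/F` be a finite Galois extension of degree `s` with cyclic Galois group generated
by `τ`, let `A = K^r` with the cyclic `F`-algebra automorphism `σ` above, and set `d = rs`.
Then `σ^d = id`, `d` is the exact order of `σ`, and the fixed points of `σ` in `A` are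
exactly the diagonal image of `F`. -/
theorem cyclic_algebra_order_and_fixed_points (F K : Type*) [Field F] [Field K] [Algebra F K]
    [FiniteDimensional F K] [IsGalois F K]
    (s : ℕ) (hs : Module.finrank F K = s) (hs1 : 1 ≤ s)
    (τ : K ≃ₐ[F] K) (hτ : ∀ g : K ≃ₐ[F] K, g ∈ Subgroup.zpowers τ)
    (r : ℕ) [NeZero r] (hr : 1 ≤ r) :
    (cycShift K r ⇑τ)^[r * s] = id ∧
    (∀ e : ℕ, 0 < e → e < r * s → (cycShift K r ⇑τ)^[e] ≠ id) ∧
    (∀ x : Fin r → K, cycShift K r ⇑τ x = x ↔ ∃ c : F, x = fun _ => algebraMap F K c) := by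
  have iterate_eq_id_iff (n : ℕ) : (cycShift K r ⇑τ)^[n] = id ↔ r * s ∣ n := by
    rw [← hs, ← orderOf_eq_finrank_of_forall_mem_zpowers hτ]
    exact iterate_cycShift_eq_id_iff_mul_dvd (algEquiv_iterate_eq_id_iff_orderOf_dvd τ) n
  refine ⟨(iterate_eq_id_iff _).mpr dvd_rfl, fun e he hlt h => ?_, fun x => ?_⟩
  · exact Nat.not_dvd_of_pos_of_lt he hlt ((iterate_eq_id_iff e).mp h)
  · simp only [cycShift_eq_self_iff, Set.exists_range_iff,
      ← mem_range_algebraMap_iff_fixed_of_forall_mem_zpowers hτ]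
end
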